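/- For all integers s ≥ 1, t ≥ 4 and k ≥ 2, there exist a 3-uniform hypergraph H and two edges e, f of H such that: (1) H admits a k-coloring of its edges with no monochromatic K_t^{(3)}; (2) the distance between e and f in H is at least s (every connecting path between e and f has at least s vertices); and (3) in every k-coloring of E(H) with no monochromatic copy of K_t^{(3)}, the edges e and f receive the same color. -/

import Mathlib

/-!
Hypergraphs are handled together with one fixed good colouring (one without a monochromatic
`K_t^{(3)}`); such a coloured hypergraph is a `CH k V`. Gluing gadgets onto a base along sets on
which the coloured structures agree (`Glue`) keeps the reference colouring good, because a vertex
private to a gadget has all its edges inside that gadget, so that a monochromatic clique lies in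
the base or in one gadget.

**Forcing from known colours.** Let `N` be such that `K_N` has a good `k`-colouring and `K_{N+1}`
has none. Adding the triples through the last vertex `o` one at a time, keeping the colours of
the triples that avoid `o`, there is a first triple `b` that cannot be added. This yields, for
each colour `y`, a gadget in which `b` gets colour `y` as soon as the edges avoiding `o` have
their reference colours (`exists_gadget`). Gluing such gadgets onto the edges of a hypergraph moves
the set of edges whose colours have to be known off any given vertices (`elim_all`). Doing it
twice, starting with two disjoint edges of one colour, produces a hypergraph whose colouring on a
remote vertex set `R` determines the colours of these two edges (`exists_det`).

**Producing known colours.** By the partite construction, based on the Hales–Jewett theorem and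
Ramsey's theorem, there is a good coloured `X` such that every `k`-colouring of `X` contains a copy
of the part inside `R` on which the colour is a function `f` of the reference colour
(`exists_pattern`). A copy of `K_N` inside `R` forces `f` to be a permutation. Gluing a copy of the
determined hypergraph onto each copy of its `R`-part in `X`, all sharing the same two edges, gives a
positive sender (`exists_sender`): composing a good colouring with the inverse of `f`, the two edges
both get colour `f x₀`.

**Distance.** Senders are concatenated. A level function on the vertices that varies by at most
one within an edge, vanishes at a vertex of the first edge and is equal to `n` on the last one,
shows that a path between these edges has more than `n` vertices (`exists_far_sender`,
`exists_level`).
-/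

/-- Coloring `c` of the edge set `E` of a 3-uniform hypergraph has no monochromatic
copy of `K_t^{(3)}`. -/
def NoMonoK3 (k t : ℕ) (E : Finset (Finset ℕ)) (c : Finset ℕ → Fin k) : Prop :=
  ¬ ∃ S : Finset ℕ, S.card = t ∧ ∃ x : Fin k, ∀ e ⊆ S, e.card = 3 → e ∈ E ∧ c e = x

/-- `S` is the vertex set of a connecting path from edge `e` to edge `f` in the 3-uniform
hypergraph with edge set `E`. -/
def IsConnPath (E : Finset (Finset ℕ)) (e f : Finset ℕ) (S : Finset ℕ) : Prop :=
  ∃ es : List (Finset ℕ), es ≠ [] ∧ es.head? = some e ∧ es.getLast? = some f ∧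
    (∀ g ∈ es, g ∈ E) ∧ es.Chain' (fun g h => (g ∩ h).Nonempty) ∧
    S = es.foldr (· ∪ ·) ∅ ∧
    ∃ vs : List ℕ, vs.Nodup ∧ vs.toFinset = S ∧
      ∀ g ∈ es, ∃ a : ℕ, g = ((vs.drop a).take 3).toFinset

namespace Sender

/-! ### Ramsey's theorem -/

/-- Ramsey's theorem for `r`-sets, by induction on `r`: inside a large set there is a large subset on
which the colour of an `(r + 1)`-set depends only on its least element. -/
theorem ramsey (κ : Type) [Finite κ] (r n : ℕ) : ∃ N, ∀ V : Finset ℕ, N ≤ V.card →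
    ∀ F : Finset ℕ → κ, ∃ S ⊆ V, S.card = n ∧ ∃ x, ∀ e ⊆ S, e.card = r → F e = x := by
  induction r generalizing n with
  | zero =>
    refine ⟨n, fun V hV F => ?_⟩
    obtain ⟨S, hS, hc⟩ := Finset.exists_subset_card_eq hV
    refine ⟨S, hS, hc, F ∅, fun e _ he => ?_⟩
    rw [Finset.card_eq_zero.1 he]
  | succ r ih =>
    have key : ∀ m, ∃ N, ∀ V : Finset ℕ, N ≤ V.card → ∀ F : Finset ℕ → κ,
        ∃ S ⊆ V, S.card = m ∧ ∃ X : ℕ → κ, ∀ e ⊆ S, e.card = r + 1 →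
          ∀ v ∈ e, (∀ u ∈ e, v ≤ u) → F e = X v := by
      intro m
      induction m with
      | zero =>
        refine ⟨0, fun V _ F => ⟨∅, by simp, rfl, fun _ => F ∅, fun e he hc => ?_⟩⟩
        rw [Finset.subset_empty.1 he] at hc
        simp at hc
      | succ m ihm =>
        obtain ⟨Nm, hNm⟩ := ihm
        obtain ⟨N, hN⟩ := ih Nm
        refine ⟨N + 1, fun V hV F => ?_⟩
        have hne : V.Nonempty := Finset.card_pos.1 (by omega)
        set v := V.min' hne with hv
        have hvV : v ∈ V := Finset.min'_mem _ _
        obtain ⟨S₁, hS₁, hc₁, x, hx⟩ := hN (V.erase v)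
          (by rw [Finset.card_erase_of_mem hvV]; omega) (fun e => F (insert v e))
        obtain ⟨S, hS, hc, X, hX⟩ := hNm S₁ hc₁.ge F
        have hvS : v ∉ S := fun h => by simpa using hS₁ (hS h)
        refine ⟨insert v S, ?_, by rw [Finset.card_insert_of_notMem hvS, hc],
          Function.update X v x, fun e he hce w hw hmin => ?_⟩
        · intro u hu
          rcases Finset.mem_insert.1 hu with rfl | hu
          · exact hvV
          · exact Finset.mem_of_mem_erase (hS₁ (hS hu))
        · have heV : ∀ u ∈ e, v ≤ u := by
            intro u hu
            rcases Finset.mem_insert.1 (he hu) with rfl | hu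
            · exact le_rfl
            · exact Finset.min'_le _ _ (Finset.mem_of_mem_erase (hS₁ (hS hu)))
          by_cases hve : v ∈ e
          · have : w = v := le_antisymm (hmin v hve) (heV w hw)
            rw [this, Function.update_self, ← hx (e.erase v) ?_ ?_, Finset.insert_erase hve]
            · intro u hu
              obtain ⟨h1, h2⟩ := Finset.mem_erase.1 hu
              exact hS ((Finset.mem_insert.1 (he h2)).resolve_left h1)
            · rw [Finset.card_erase_of_mem hve, hce]; rfl
          · have hwv : w ≠ v := fun h => hve (h ▸ hw)
            rw [Function.update_of_ne hwv]
            refine hX e (fun u hu => ?_) hce w hw hmin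
            exact (Finset.mem_insert.1 (he hu)).resolve_left (fun h => hve (h ▸ hu))
    classical
    have := Fintype.ofFinite κ
    obtain ⟨N, hN⟩ := key (Fintype.card κ * n)
    refine ⟨N, fun V hV F => ?_⟩
    obtain ⟨S, hS, hc, X, hX⟩ := hN V hV F
    have : Nonempty κ := ⟨F ∅⟩
    obtain ⟨x, -, hx⟩ := Finset.exists_le_card_fiber_of_mul_le_card_of_maps_to
      (s := S) (t := Finset.univ) (f := X) (n := n) (fun _ _ => Finset.mem_univ _)
      Finset.univ_nonempty (by rw [hc]; rfl)
    obtain ⟨T, hT, hTc⟩ := Finset.exists_subset_card_eq hx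
    refine ⟨T, fun u hu => hS (Finset.mem_filter.1 (hT hu)).1, hTc, x, fun e he hce => ?_⟩
    have hne : e.Nonempty := Finset.card_pos.1 (by omega)
    rw [hX e (fun u hu => (Finset.mem_filter.1 (hT (he hu))).1) hce _ (e.min'_mem hne)
      (fun u hu => e.min'_le u hu)]
    exact (Finset.mem_filter.1 (hT (he (e.min'_mem hne)))).2

theorem ramsey_set (κ : Type) [Finite κ] (r n : ℕ) : ∃ N, ∀ F : Set (Fin N) → κ,
    ∃ S : Set (Fin N), S.ncard = n ∧ ∃ x, ∀ e ⊆ S, e.ncard = r → F e = x := by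
  obtain ⟨N, hN⟩ := ramsey κ r n
  refine ⟨N, fun F => ?_⟩
  obtain ⟨S, hS, hc, x, hx⟩ := hN (Finset.range N) (by simp) fun e => F {a | a.1 ∈ e}
  refine ⟨{a | a.1 ∈ S}, ?_, x, fun e he h3 => ?_⟩
  · rw [← hc, ← Set.ncard_coe_finset, ← Set.ncard_image_of_injective _ Fin.val_injective]
    congr 1
    ext u
    constructor
    · rintro ⟨a, ha, rfl⟩; exact ha
    · exact fun hu => ⟨⟨u, Finset.mem_range.1 (hS hu)⟩, hu, rfl⟩
  · have h := hx (e.toFinite.toFinset.map Fin.valEmbedding) ?_ ?_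
    · rw [← h]
      congr 1
      ext a
      simp only [Set.mem_ofPred_eq, Finset.mem_map, Set.Finite.mem_toFinset,
        Fin.valEmbedding_apply]
      exact ⟨fun ha => ⟨a, ha, rfl⟩, fun ⟨b, hb, hab⟩ => Fin.ext hab ▸ hb⟩
    · intro u hu
      obtain ⟨a, ha, rfl⟩ := Finset.mem_map.1 hu
      exact he ((Set.Finite.mem_toFinset _).1 ha)
    · rw [Finset.card_map, ← Set.ncard_eq_toFinset_card, h3]

/-! ### Coloured hypergraphs and gluing -/

/-- A 3-uniform hypergraph on `V` together with a reference `k`-colouring of its edges: `rel e x` says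
that `e` is an edge of colour `x`. -/
structure CH (k : ℕ) (V : Type) where
  rel : Set V → Fin k → Prop
  card3 : ∀ {e x}, rel e x → e.ncard = 3
  func : ∀ {e x y}, rel e x → rel e y → x = y

variable {k t : ℕ} {V V' V₀ I U : Type}

/-- The reference colouring has no monochromatic `K_t^{(3)}`. -/
def CH.Good (t : ℕ) (H : CH k V) : Prop :=
  ∀ S : Set V, S.ncard = t → ∀ x, ∃ e ⊆ S, e.ncard = 3 ∧ ¬ H.rel e x

/-- `c` is a colouring of the edges of `H` without monochromatic `K_t^{(3)}`; its values on non-edges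
do not matter. -/
def CH.GoodCol (t : ℕ) (H : CH k V) (c : Set V → Fin k) : Prop :=
  ∀ S : Set V, S.ncard = t → ∀ x, ∃ e ⊆ S, e.ncard = 3 ∧ ¬ ((∃ y, H.rel e y) ∧ c e = x)

/-- `j` embeds `H` in `H'` as an induced subhypergraph, with the same reference colours. -/
structure Emb (H : CH k V) (H' : CH k V') (j : V → V') : Prop where
  inj : Function.Injective j
  rel : ∀ e x, H'.rel (j '' e) x ↔ H.rel e x

theorem CH.GoodCol.pull {H : CH k V} {H' : CH k V'} {j : V → V'} {c : Set V' → Fin k}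
    (hc : H'.GoodCol t c) (hj : Function.Injective j)
    (hr : ∀ e x, H.rel e x → ∃ y, H'.rel (j '' e) y) : H.GoodCol t (fun e => c (j '' e)) := by
  intro S hS x
  obtain ⟨e, he, h3, h⟩ := hc (j '' S) (by rw [Set.ncard_image_of_injective _ hj, hS]) x
  obtain ⟨e, he', rfl⟩ := Set.subset_image_iff.1 he
  rw [Set.ncard_image_of_injective _ hj] at h3
  exact ⟨e, he', h3, fun ⟨⟨y, hy⟩, hx⟩ => h ⟨hr e y hy, hx⟩⟩

theorem CH.GoodCol.pullEmb {H : CH k V} {H' : CH k V'} {j : V → V'} {c : Set V' → Fin k}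
    (hc : H'.GoodCol t c) (hj : Emb H H' j) : H.GoodCol t (fun e => c (j '' e)) :=
  hc.pull hj.inj fun e x h => ⟨x, (hj.rel e x).2 h⟩

theorem Emb.comp {V'' : Type} {H : CH k V} {H' : CH k V'} {H'' : CH k V''} {j : V → V'}
    {j' : V' → V''} (h' : Emb H' H'' j') (h : Emb H H' j) : Emb H H'' (j' ∘ j) :=
  ⟨h'.inj.comp h.inj, fun e x => by rw [Set.image_comp, h'.rel, h.rel]⟩

theorem Emb.id (H : CH k V) : Emb H H _root_.id := ⟨fun _ _ h => h, fun e x => by simp⟩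

theorem exists_triple {S : Set V} (hS : 3 ≤ S.ncard) {a b : V} (ha : a ∈ S) (hb : b ∈ S) :
    ∃ e ⊆ S, e.ncard = 3 ∧ a ∈ e ∧ b ∈ e := by
  have hf : S.Finite := Set.finite_of_ncard_pos (by omega)
  obtain ⟨e, h1, h2, h3⟩ := Set.exists_subsuperset_card_eq (s := {a, b}) (t := S) (n := 3)
    (by rintro x (rfl | rfl) <;> assumption) ((Set.ncard_insert_le _ _).trans (by simp)) hS
  exact ⟨e, h2, h3, h1 (by simp), h1 (by simp)⟩

/-- Gluing data: a base `H₀` and gadgets `H i` on a common vertex type `U`, to be attached along the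
root set `R ⊆ U` by the maps `ρ i`, which preserve edges, non-edges and reference colours within
the root set. Values of `ρ i` outside `R` are irrelevant. -/
structure Glue (k : ℕ) (V₀ I U : Type) where
  H₀ : CH k V₀
  H : I → CH k U
  R : Set U
  ρ : I → U → V₀
  inj : ∀ i, Set.InjOn (ρ i) R
  compat : ∀ i e x, e ⊆ R → (H₀.rel (ρ i '' e) x ↔ (H i).rel e x)

namespace Glue
variable (D : Glue k V₀ I U)

open scoped Classical in
/-- The map of the gadget `i` into the glued vertex type: roots go to the base, the other vertices
are private. -/
noncomputable def j (i : I) (u : U) : V₀ ⊕ (I × U) :=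
  if u ∈ D.R then .inl (D.ρ i u) else .inr (i, u)

theorem j_mem {i u} (h : u ∈ D.R) : D.j i u = .inl (D.ρ i u) := if_pos h
theorem j_notMem {i u} (h : u ∉ D.R) : D.j i u = .inr (i, u) := if_neg h

theorem j_eq_inr {i u p} (h : D.j i u = .inr p) : u ∉ D.R ∧ p = (i, u) := by
  by_cases hu : u ∈ D.R
  · rw [D.j_mem hu] at h; cases h
  · rw [D.j_notMem hu] at h; exact ⟨hu, (Sum.inr.inj h).symm⟩

theorem j_eq_inl {i u v} (h : D.j i u = .inl v) : u ∈ D.R ∧ v = D.ρ i u := by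
  by_cases hu : u ∈ D.R
  · rw [D.j_mem hu] at h; exact ⟨hu, (Sum.inl.inj h).symm⟩
  · rw [D.j_notMem hu] at h; cases h

theorem j_inj (i : I) : Function.Injective (D.j i) := by
  intro u v h
  by_cases hv : v ∈ D.R
  · rw [D.j_mem hv] at h
    obtain ⟨hu, he⟩ := D.j_eq_inl h
    exact (D.inj i hv hu he).symm
  · rw [D.j_notMem hv] at h
    exact (Prod.mk.inj (D.j_eq_inr h).2).2.symm

theorem j_image {i} {e : Set U} (h : e ⊆ D.R) : D.j i '' e = Sum.inl '' (D.ρ i '' e) := by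
  rw [Set.image_image]
  exact Set.image_congr fun u hu => D.j_mem (h hu)

theorem sub_of_image_eq {i} {e : Set U} {e₀ : Set V₀} (h : D.j i '' e = Sum.inl '' e₀) :
    e ⊆ D.R ∧ e₀ = D.ρ i '' e := by
  have he : e ⊆ D.R := by
    intro u hu
    have : D.j i u ∈ Sum.inl '' e₀ := h ▸ Set.mem_image_of_mem _ hu
    obtain ⟨v, -, hv⟩ := this
    exact (D.j_eq_inl hv.symm).1
  refine ⟨he, ?_⟩
  rw [D.j_image he] at h
  exact (Sum.inl_injective.image_injective h).symm

/-- The coloured edges of the glued hypergraph: those of the base and those of the copies of the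
gadgets. -/
def relP (e' : Set (V₀ ⊕ (I × U))) (x : Fin k) : Prop :=
  (∃ e, D.H₀.rel e x ∧ e' = Sum.inl '' e) ∨ ∃ i e, (D.H i).rel e x ∧ e' = D.j i '' e

theorem relP_inl (e x) : D.relP (Sum.inl '' e) x ↔ D.H₀.rel e x := by
  constructor
  · rintro (⟨e', h, he⟩ | ⟨i, e', h, he⟩)
    · rwa [Sum.inl_injective.image_injective he]
    · obtain ⟨h1, rfl⟩ := D.sub_of_image_eq he.symm
      exact (D.compat _ _ _ h1).2 h
  · exact fun h => Or.inl ⟨e, h, rfl⟩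

theorem relP_j (i e x) : D.relP (D.j i '' e) x ↔ (D.H i).rel e x := by
  constructor
  · intro h
    by_cases hR : e ⊆ D.R
    · rw [D.j_image hR, relP_inl] at h
      exact (D.compat _ _ _ hR).1 h
    · obtain ⟨u, hu, huR⟩ := Set.not_subset.1 hR
      have hm : Sum.inr (i, u) ∈ D.j i '' e := ⟨u, hu, D.j_notMem huR⟩
      obtain (⟨e', h, he⟩ | ⟨i', e', h, he⟩) := h
      · rw [he] at hm; obtain ⟨_, _, h⟩ := hm; cases h
      · rw [he] at hm
        obtain ⟨u', -, hu'⟩ := hm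
        obtain rfl : i = i' := (Prod.mk.inj (D.j_eq_inr hu').2).1
        rwa [(D.j_inj i).image_injective he]
  · exact fun h => Or.inr ⟨i, e, h, rfl⟩

/-- The glued hypergraph. The vertices `inr (i, u)` with `u ∈ R` belong to no edge. -/
def out : CH k (V₀ ⊕ (I × U)) where
  rel := D.relP
  card3 := by
    rintro _ x (⟨e, h, rfl⟩ | ⟨i, e, h, rfl⟩)
    · rw [Set.ncard_image_of_injective _ Sum.inl_injective, D.H₀.card3 h]
    · rw [Set.ncard_image_of_injective _ (D.j_inj i), (D.H i).card3 h]
  func := by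
    rintro _ x y (⟨e, h, rfl⟩ | ⟨i, e, h, rfl⟩) h'
    · exact D.H₀.func h ((D.relP_inl _ _).1 h')
    · exact (D.H i).func h ((D.relP_j _ _ _).1 h')

theorem emb_inl : Emb D.H₀ D.out Sum.inl := ⟨Sum.inl_injective, D.relP_inl⟩
theorem emb_j (i : I) : Emb (D.H i) D.out (D.j i) := ⟨D.j_inj i, D.relP_j i⟩

/-- An edge through a vertex private to the gadget `i` comes from that gadget. -/
theorem private_edge {e' x i u} (h : D.out.rel e' x) (hm : Sum.inr (i, u) ∈ e') :
    u ∉ D.R ∧ ∃ e, (D.H i).rel e x ∧ u ∈ e ∧ e' = D.j i '' e := by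
  obtain (⟨e, h, rfl⟩ | ⟨i', e, h, rfl⟩) := h
  · obtain ⟨_, _, h⟩ := hm; cases h
  · obtain ⟨u', hu', he⟩ := hm
    obtain ⟨h1, h2⟩ := D.j_eq_inr he
    obtain ⟨rfl, rfl⟩ := Prod.mk.inj h2
    exact ⟨h1, e, h, hu', rfl⟩

/-- A clique with a vertex private to a gadget lies in that gadget, any other one in the base. -/
theorem good (ht : 4 ≤ t) (h₀ : D.H₀.Good t) (h : ∀ i, (D.H i).Good t) : D.out.Good t := by
  intro S hS x
  by_contra! hcon
  by_cases hp : ∃ p, Sum.inr p ∈ S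
  · obtain ⟨⟨i, u⟩, hp⟩ := hp
    have hsub : S ⊆ Set.range (D.j i) := by
      intro w hw
      obtain ⟨e, h1, h2, h3, h4⟩ := exists_triple (by omega) hp hw
      obtain ⟨-, e, -, -, rfl⟩ := D.private_edge (hcon e h1 h2) h3
      exact Set.image_subset_range _ _ h4
    obtain ⟨S, rfl⟩ := Set.subset_range_iff_exists_image_eq.1 hsub
    rw [Set.ncard_image_of_injective _ (D.j_inj i)] at hS
    obtain ⟨e, h1, h2, h3⟩ := h i S hS x
    exact h3 ((D.relP_j _ _ _).1 (hcon _ (Set.image_mono h1)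
      (by rw [Set.ncard_image_of_injective _ (D.j_inj i), h2])))
  · have hsub : S ⊆ Set.range Sum.inl := by
      rintro (w | w) hw
      · exact ⟨w, rfl⟩
      · exact absurd ⟨w, hw⟩ hp
    obtain ⟨S, rfl⟩ := Set.subset_range_iff_exists_image_eq.1 hsub
    rw [Set.ncard_image_of_injective _ Sum.inl_injective] at hS
    obtain ⟨e, h1, h2, h3⟩ := h₀ S hS x
    exact h3 ((D.relP_inl _ _).1 (hcon _ (Set.image_mono h1)
      (by rw [Set.ncard_image_of_injective _ Sum.inl_injective, h2])))

end Glue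

/-! ### The gadget forcing one colour -/

/-- `c` has no monochromatic `K_t^{(3)}` when only the triples in `Z` count as edges. -/
def GoodOn (t : ℕ) (Z : Set (Set V)) (c : Set V → Fin k) : Prop :=
  ∀ S : Set V, S.ncard = t → ∀ x, ∃ e ⊆ S, e.ncard = 3 ∧ ¬ (e ∈ Z ∧ c e = x)

theorem GoodOn.pull {Z : Set (Set V)} {c : Set V' → Fin k} {Z' : Set (Set V')}
    (hc : GoodOn t Z' c) (j : V → V') (hj : Function.Injective j)
    (hr : ∀ e ∈ Z, j '' e ∈ Z') : GoodOn t Z (fun e => c (j '' e)) := by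
  intro S hS x
  obtain ⟨e, he, h3, h⟩ := hc (j '' S) (by rw [Set.ncard_image_of_injective _ hj, hS]) x
  obtain ⟨e, he', rfl⟩ := Set.subset_image_iff.1 he
  rw [Set.ncard_image_of_injective _ hj] at h3
  exact ⟨e, he', h3, fun ⟨hy, hx⟩ => h ⟨hr e hy, hx⟩⟩

/-- There is a critical `N`: the complete hypergraph on `N` vertices has a good colouring, the one on
`N + 1` vertices has none. -/
theorem exists_critical (hk : 0 < k) (ht : 4 ≤ t) : ∃ N,
    (∃ φ : Set (Fin N) → Fin k, GoodOn t Set.univ φ) ∧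
    ¬ ∃ c : Set (Option (Fin N)) → Fin k, GoodOn t Set.univ c := by
  by_contra! hcon
  have hall : ∀ N, ∃ φ : Set (Fin N) → Fin k, GoodOn t Set.univ φ := by
    intro N
    induction N with
    | zero =>
      refine ⟨fun _ => ⟨0, hk⟩, fun S hS => ?_⟩
      have : S = ∅ := Set.eq_empty_of_isEmpty S
      rw [this, Set.ncard_empty] at hS
      omega
    | succ N ih =>
      obtain ⟨c, hc⟩ := hcon N ih
      exact ⟨_, hc.pull (finSuccEquiv N) (finSuccEquiv N).injective fun _ _ => trivial⟩
  obtain ⟨N, hN⟩ := ramsey_set (Fin k) 3 t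
  obtain ⟨φ, hφ⟩ := hall N
  obtain ⟨S, hS, x, hx⟩ := hN φ
  obtain ⟨e, he, h3, h⟩ := hφ S hS x
  exact h ⟨trivial, hx e he h3⟩

/-- In `H` the edge `b` has reference colour `y`, and it gets this colour in every good colouring that
agrees with the reference colouring on the edges avoiding `o`. -/
def IsGadget (t : ℕ) (b : Set V) (o : V) (y : Fin k) (H : CH k V) : Prop :=
  H.Good t ∧ H.rel b y ∧ ∀ c, H.GoodCol t c → (∀ e x, H.rel e x → o ∉ e → c e = x) → c b = y

/-- Given a good colouring `φ` of the triples avoiding `o` that does not extend to a good colouring of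
all triples, let `b` be a triple whose addition first makes an extension impossible. The triple `b`
does not depend on the colour `y` to be forced. -/
theorem exists_gadget [Finite V] (ht : 4 ≤ t) (o : V) (φ : Set V → Fin k)
    (hφ : GoodOn t {e | o ∉ e} φ) (hno : ¬ ∃ c : Set V → Fin k, GoodOn t Set.univ c) :
    ∃ b : Set V, b.ncard = 3 ∧ o ∈ b ∧ ∀ y, ∃ H : CH k V, IsGadget t b o y H := by
  classical
  -- `Ext Z`: `φ` extends to a good colouring once the triples in `Z` are added.
  let Ext : Set (Set V) → Prop := fun Z =>
    ∃ c, (∀ e, o ∉ e → c e = φ e) ∧ GoodOn t ({e | o ∉ e} ∪ Z) c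
  have key : ∃ b Z, b.ncard = 3 ∧ o ∈ b ∧ (∀ e ∈ Z, o ∈ e ∧ e.ncard = 3) ∧ Ext Z ∧
      ¬ Ext (insert b Z) := by
    by_contra! hcon
    have hE : Ext {e | e.ncard = 3 ∧ o ∈ e} := by
      refine Set.Finite.induction_on_subset (motive := fun Z _ => Ext Z) _
        (Set.toFinite _) ⟨φ, fun _ _ => rfl, by simpa using hφ⟩ ?_
      intro b Z hb hZ _ h
      exact hcon b Z hb.1 hb.2 (fun e he => ⟨(hZ he).2, (hZ he).1⟩) h
    obtain ⟨c, -, hc⟩ := hE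
    refine hno ⟨c, fun S hS x => ?_⟩
    obtain ⟨e, he, h3, h⟩ := hc S hS x
    refine ⟨e, he, h3, fun h' => h ⟨?_, h'.2⟩⟩
    by_cases ho : o ∈ e
    · exact Or.inr ⟨h3, ho⟩
    · exact Or.inl ho
  obtain ⟨b, Z, hb3, hob, hZ, ⟨c₀, hc₀φ, hc₀⟩, hnE⟩ := key
  refine ⟨b, hb3, hob, fun y => ?_⟩
  -- Triples of colour `y` containing `b \ {o}` are dropped, so that giving `b` the colour `y` creates
  -- no monochromatic clique.
  let Ed : Set V → Prop := fun e =>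
    (o ∉ e ∧ ¬ (c₀ e = y ∧ b \ {o} ⊆ e)) ∨ e ∈ Z ∨ e = b
  let H : CH k V :=
    { rel := fun e x => e.ncard = 3 ∧ Ed e ∧ (if e = b then y else c₀ e) = x
      card3 := fun h => h.1
      func := fun h h' => h.2.2.symm.trans h'.2.2 }
  refine ⟨H, ?_, ⟨hb3, Or.inr (Or.inr rfl), if_pos rfl⟩, ?_⟩
  · intro S hS x
    by_contra! hcon
    by_cases hbS : b ⊆ S
    · obtain rfl : y = x := by have := (hcon b hbS hb3).2.2; rwa [if_pos rfl] at this
      obtain ⟨v, hv, hvb⟩ := Set.exists_mem_notMem_of_ncard_lt_ncard (s := b) (t := S)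
        (by omega)
      have hvo : v ≠ o := fun h => hvb (h ▸ hob)
      have hoe : o ∉ insert v (b \ {o}) := by
        rintro (h | h)
        · exact hvo h.symm
        · exact h.2 rfl
      have h := hcon (insert v (b \ {o})) (Set.insert_subset hv (Set.sdiff_subset.trans hbS)) (by
        rw [Set.ncard_insert_of_notMem (fun h => hvb h.1), Set.ncard_sdiff_singleton_of_mem hob,
          hb3])
      have hne : insert v (b \ {o}) ≠ b := fun h => hoe (h.symm ▸ hob)
      obtain ⟨-, h1, h2⟩ := h
      rw [if_neg hne] at h2
      rcases h1 with h1 | h1 | h1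
      · exact h1.2 ⟨h2, Set.subset_insert _ _⟩
      · exact hoe (hZ _ h1).1
      · exact hne h1
    · obtain ⟨e, he, h3, h⟩ := hc₀ S hS x
      have hne : e ≠ b := fun h => hbS (h ▸ he)
      obtain ⟨-, h1, h2⟩ := hcon e he h3
      rw [if_neg hne] at h2
      rcases h1 with h1 | h1 | h1
      · exact h ⟨Or.inl h1.1, h2⟩
      · exact h ⟨Or.inr h1, h2⟩
      · exact hne h1
  · intro c hc hag
    by_contra hby
    -- If `c b ≠ y`, then `c` on the triples through `o`, with `φ` on the others, would witness
    -- `Ext (insert b Z)`: a clique of the colour of `b` has not lost any edge.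
    refine hnE ⟨fun e => if o ∈ e then c e else φ e, fun e he => if_neg he, fun S hS x => ?_⟩
    by_cases hoS : o ∈ S
    · by_contra! hcon
      obtain ⟨e, he, h3, h⟩ := hc S hS x
      have hSe : b ⊆ S → x ≠ y := by
        intro hbS hxy
        have := (hcon b hbS hb3).2
        rw [if_pos hob] at this
        exact hby (this.trans hxy)
      obtain ⟨hZe, hx⟩ := hcon e he h3
      by_cases hoe : o ∈ e
      · rw [if_pos hoe] at hx
        refine h ⟨⟨_, h3, ?_, rfl⟩, hx⟩
        rcases hZe with hZe | rfl | hZe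
        · exact absurd hoe hZe
        · exact Or.inr (Or.inr rfl)
        · exact Or.inr (Or.inl hZe)
      · rw [if_neg hoe] at hx
        have hr : H.rel e x := by
          refine ⟨h3, Or.inl ⟨hoe, fun ⟨h1, h2⟩ => ?_⟩, ?_⟩
          · refine hSe (fun u hu => ?_) (hx.symm.trans ((hc₀φ e hoe).symm.trans h1))
            by_cases huo : u = o
            · exact huo ▸ hoS
            · exact he (h2 ⟨hu, huo⟩)
          · rw [if_neg (fun h : e = b => hoe (h.symm ▸ hob)), hc₀φ e hoe, hx]
        exact h ⟨⟨x, hr⟩, hag e x hr hoe⟩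
    · obtain ⟨e, he, h3, h⟩ := hφ S hS x
      have hoe : o ∉ e := fun h => hoS (he h)
      refine ⟨e, he, h3, fun ⟨_, h2⟩ => h ⟨hoe, ?_⟩⟩
      exact (if_neg hoe).symm.trans h2

/-! ### Moving the known colours away from given vertices -/

theorem exists_root_map {O : Type} {b : Set O} {a : Set V} (hb : b.ncard = 3) (ha : a.ncard = 3)
    {o : O} {p : V} (ho : o ∈ b) (hp : p ∈ a) :
    ∃ ρ : O → V, Set.InjOn ρ b ∧ ρ '' b = a ∧ ρ o = p := by
  classical
  have h1 : (b \ {o}).ncard = 2 := by rw [Set.ncard_sdiff_singleton_of_mem ho, hb]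
  have h2 : (a \ {p}).ncard = 2 := by rw [Set.ncard_sdiff_singleton_of_mem hp, ha]
  obtain ⟨b1, b2, hb12, hbe⟩ := Set.ncard_eq_two.1 h1
  obtain ⟨a1, a2, ha12, hae⟩ := Set.ncard_eq_two.1 h2
  have hbo : b = {o, b1, b2} := by
    rw [← hbe, Set.insert_sdiff_singleton, Set.insert_eq_of_mem ho]
  have hap : a = {p, a1, a2} := by
    rw [← hae, Set.insert_sdiff_singleton, Set.insert_eq_of_mem hp]
  have e1 : b1 ∈ b \ {o} := hbe ▸ by simp
  have e2 : b2 ∈ b \ {o} := hbe ▸ by simp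
  have f1 : a1 ∈ a \ {p} := hae ▸ by simp
  have f2 : a2 ∈ a \ {p} := hae ▸ by simp
  have n1 : b1 ≠ o := e1.2
  have n2 : b2 ≠ o := e2.2
  have m1 : a1 ≠ p := f1.2
  have m2 : a2 ≠ p := f2.2
  let ρ : O → V := fun u => if u = o then p else if u = b1 then a1 else a2
  have r0 : ρ o = p := if_pos rfl
  have r1 : ρ b1 = a1 := by simp [ρ, n1]
  have r2 : ρ b2 = a2 := by simp [ρ, n2, hb12.symm]
  refine ⟨ρ, ?_, ?_, r0⟩
  · rw [hbo]
    rintro u (rfl | rfl | rfl) v (rfl | rfl | rfl) h <;>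
      simp only [r0, r1, r2] at h <;> first | rfl | (exact absurd h ‹_›) | (exact absurd h.symm ‹_›)
  · rw [hbo, hap, Set.image_insert_eq, Set.image_pair, r0, r1, r2]

/-- The compatibility required in `Glue` when the root set is a single edge. -/
theorem compat_edge {O : Type} {b : Set O} (hb : b.ncard = 3) {ρ : O → V} (hρ : Set.InjOn ρ b)
    {H : CH k V} {H' : CH k O} {y : Fin k} (h' : H'.rel b y) (h : H.rel (ρ '' b) y) (e : Set O)
    (x : Fin k) (he : e ⊆ b) : H.rel (ρ '' e) x ↔ H'.rel e x := by
  have heb : e.ncard = 3 → e = b := fun h =>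
    Set.eq_of_subset_of_ncard_le he (by omega) (Set.finite_of_ncard_pos (by omega))
  constructor
  · intro hx
    have h3 := H.card3 hx
    rw [(hρ.mono he).ncard_image] at h3
    obtain rfl := heb h3
    rwa [H.func hx h]
  · intro hx
    obtain rfl := heb (H'.card3 hx)
    rwa [H'.func hx h']

/-- A gadget is glued onto every edge inside `R`, with its special vertex `o` put at `p` whenever `p`
belongs to the edge. Known colours on the edges inside the set `R'` of non-special gadget vertices
then force the colours inside `R`, and `R'` meets the old vertices in a subset of `R \ {p}`. -/
theorem elim_vertex {O : Type} [Finite O] [Finite V] (ht : 4 ≤ t) {b : Set O} {o : O}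
    (hb : b.ncard = 3) (ho : o ∈ b)
    (D : Fin k → CH k O) (hD : ∀ y, IsGadget t b o y (D y)) (H : CH k V) (hH : H.Good t)
    (R : Set V) (p : V) :
    ∃ (V' : Type) (_ : Finite V') (H' : CH k V') (ι : V → V') (R' : Set V'), H'.Good t ∧
      Emb H H' ι ∧
      (∀ c, H'.GoodCol t c → (∀ e x, H'.rel e x → e ⊆ R' → c e = x) →
        ∀ e x, H.rel e x → e ⊆ R → c (ι '' e) = x) ∧
      (∀ v, ι v ∈ R' → v ∈ R ∧ v ≠ p) ∧
      (∀ e' x v, H'.rel e' x → ι v ∈ e' → v ∉ R → ∃ e, e' = ι '' e) := by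
  classical
  let I := {a : Set V × Fin k // H.rel a.1 a.2 ∧ a.1 ⊆ R}
  have hρ : ∀ i : I, ∃ ρ : O → V, Set.InjOn ρ b ∧ ρ '' b = i.1.1 ∧ (p ∈ i.1.1 → ρ o = p) := by
    rintro ⟨⟨a, x⟩, ha, haR⟩
    have h3 : a.ncard = 3 := H.card3 ha
    by_cases hp : p ∈ a
    · obtain ⟨ρ, h1, h2, h3⟩ := exists_root_map hb h3 ho hp
      exact ⟨ρ, h1, h2, fun _ => h3⟩
    · obtain ⟨q, hq⟩ := Set.nonempty_of_ncard_ne_zero (s := a) (by omega)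
      obtain ⟨ρ, h1, h2, h3⟩ := exists_root_map hb h3 ho hq
      exact ⟨ρ, h1, h2, fun h => absurd h hp⟩
  choose ρ hinj him hρo using hρ
  let G : Glue k V I O :=
    { H₀ := H
      H := fun i => D i.1.2
      R := b
      ρ := ρ
      inj := hinj
      compat := fun i => compat_edge hb (hinj i) (hD _).2.1 (by rw [him]; exact i.2.1) }
  refine ⟨_, inferInstance, G.out, Sum.inl, {w | ∃ i u, u ≠ o ∧ w = G.j i u},
    G.good ht hH fun i => (hD _).1, G.emb_inl, ?_, ?_, ?_⟩
  · intro c hc hag e x he heR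
    let i : I := ⟨(e, x), he, heR⟩
    have h := (hD x).2.2 (fun a => c (G.j i '' a)) (hc.pullEmb (G.emb_j i)) ?_
    · have h' : G.j i '' b = Sum.inl '' (ρ i '' b) := G.j_image (i := i) (le_refl b)
      rw [him i] at h'
      change c (G.j i '' b) = x at h
      rwa [h'] at h
    · intro a z ha hoa
      refine hag _ _ (((G.emb_j i).rel a z).2 ha) ?_
      rintro _ ⟨u, hu, rfl⟩
      exact ⟨i, u, fun h => hoa (h ▸ hu), rfl⟩
  · rintro v ⟨i, u, huo, h⟩
    obtain ⟨hub, rfl⟩ := G.j_eq_inl h.symm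
    have hmem : ρ i u ∈ i.1.1 := him i ▸ Set.mem_image_of_mem _ hub
    refine ⟨i.2.2 hmem, fun h => huo ?_⟩
    have h : ρ i u = p := h
    exact hinj i hub ho (h.trans (hρo i (h ▸ hmem)).symm)
  · rintro e' x v (⟨e, -, he⟩ | ⟨i, e, he, rfl⟩) hv hvR
    · exact ⟨e, he⟩
    · obtain ⟨u, -, hu⟩ := hv
      obtain ⟨hub, rfl⟩ := G.j_eq_inl hu
      exact absurd (i.2.2 (him i ▸ Set.mem_image_of_mem _ hub)) hvR

/-- Iteration of `elim_vertex` over the vertices of `W`. -/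
theorem elim_all {O : Type} [Finite O] [Finite V] (ht : 4 ≤ t) {b : Set O} {o : O}
    (hb : b.ncard = 3) (ho : o ∈ b)
    (D : Fin k → CH k O) (hD : ∀ y, IsGadget t b o y (D y)) (H : CH k V) (hH : H.Good t)
    (R : Set V) (W : Set V) :
    ∃ (V' : Type) (_ : Finite V') (H' : CH k V') (ι : V → V') (R' : Set V'), H'.Good t ∧
      Emb H H' ι ∧
      (∀ c, H'.GoodCol t c → (∀ e x, H'.rel e x → e ⊆ R' → c e = x) →
        ∀ e x, H.rel e x → e ⊆ R → c (ι '' e) = x) ∧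
      (∀ v, ι v ∈ R' → v ∈ R ∧ v ∉ W) ∧
      (∀ e' x v, H'.rel e' x → ι v ∈ e' → v ∉ R → ∃ e, e' = ι '' e) := by
  induction W, W.toFinite using Set.Finite.induction_on with
  | empty =>
    refine ⟨V, inferInstance, H, id, R, hH, Emb.id H, ?_, fun v hv => ⟨hv, fun h => h⟩,
      fun e _ _ _ _ _ => ⟨e, by simp⟩⟩
    intro c _ h e x he heR
    rw [Set.image_id]; exact h e x he heR
  | @insert p W _ _ ih =>
    obtain ⟨V₁, _, H₁, ι₁, R₁, hg₁, he₁, a₁, b₁, c₁⟩ := ih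
    obtain ⟨V₂, hV₂, H₂, ι₂, R₂, hg₂, he₂, a₂, b₂, c₂⟩ :=
      elim_vertex ht hb ho D hD H₁ hg₁ R₁ (ι₁ p)
    refine ⟨V₂, hV₂, H₂, ι₂ ∘ ι₁, R₂, hg₂, he₂.comp he₁, ?_, ?_, ?_⟩
    · intro c hc hag e x he heR
      rw [Set.image_comp]
      exact a₁ (fun a => c (ι₂ '' a)) (hc.pullEmb he₂) (a₂ c hc hag) e x he heR
    · intro v hv
      obtain ⟨h1, h2⟩ := b₂ _ hv
      obtain ⟨h3, h4⟩ := b₁ _ h1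
      refine ⟨h3, ?_⟩
      rintro (rfl | h)
      · exact h2 rfl
      · exact h4 h
    · intro e' x v he' hv hvR
      obtain ⟨e, rfl⟩ := c₂ e' x (ι₁ v) he' hv fun h => hvR (b₁ v h).1
      obtain ⟨u, hu, huv⟩ := hv
      obtain rfl := he₂.inj huv
      obtain ⟨e, rfl⟩ := c₁ e x v ((he₂.rel _ _).1 he') hu hvR
      exact ⟨e, (Set.image_comp _ _ _).symm⟩

/-- The gluing data of a disjoint union; the vertex `v` only serves as a value for the unused map `ρ`. -/
def disj (H : CH k V) (H' : CH k V') (v : V) : Glue k V Unit V' where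
  H₀ := H
  H := fun _ => H'
  R := ∅
  ρ := fun _ _ => v
  inj := fun _ => Set.injOn_empty _
  compat := by
    intro _ e x he
    obtain rfl := Set.subset_empty_iff.1 he
    constructor
    · intro h; simpa using H.card3 h
    · intro h; simpa using H'.card3 h

/-- `H₀` embeds in a hypergraph `H` with a vertex set `R`, far from `H₀` in that no edge meets both,
such that the reference colours on the edges inside `R` force those of `H₀`. Moreover, if a good
colouring on the edges inside `R` is a function `f` of the reference colour, then `f` is injective. -/
theorem exists_det [Finite V₀] [Nonempty V₀] (hk : 0 < k) (ht : 4 ≤ t) (H₀ : CH k V₀)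
    (hH₀ : H₀.Good t) :
    ∃ (V : Type) (_ : Finite V) (H : CH k V) (ι : V₀ → V) (R : Set V), H.Good t ∧
      Emb H₀ H ι ∧
      (∀ c, H.GoodCol t c → (∀ e x, H.rel e x → e ⊆ R → c e = x) →
        ∀ e x, H₀.rel e x → c (ι '' e) = x) ∧
      (∀ v, ι v ∉ R) ∧
      (∀ e x v w, H.rel e x → ι v ∈ e → w ∈ R → w ∉ e) ∧
      (∀ c (f : Fin k → Fin k), H.GoodCol t c → (∀ e x, H.rel e x → e ⊆ R → c e = f x) →
        Function.Injective f) := by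
  obtain ⟨N, ⟨φ, hφ⟩, hno⟩ := exists_critical (k := k) hk ht
  have hφ' : GoodOn t {e : Set (Option (Fin N)) | none ∉ e} (fun e => φ (some ⁻¹' e)) := by
    intro S hS x
    by_cases hnS : none ∈ S
    · obtain ⟨e, h1, h2, h3, -⟩ := exists_triple (S := S) (by omega) hnS hnS
      exact ⟨e, h1, h2, fun h => h.1 h3⟩
    · have hr : S ⊆ Set.range some := by
        rintro (_ | u) hu
        · exact absurd hu hnS
        · exact ⟨u, rfl⟩
      obtain ⟨S, rfl⟩ := Set.subset_range_iff_exists_image_eq.1 hr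
      rw [Set.ncard_image_of_injective _ (Option.some_injective _)] at hS
      obtain ⟨e, h1, h2, h3⟩ := hφ S hS x
      refine ⟨some '' e, Set.image_mono h1, ?_, fun h => h3 ⟨trivial, ?_⟩⟩
      · rw [Set.ncard_image_of_injective _ (Option.some_injective _), h2]
      · have : φ (some ⁻¹' (some '' e)) = x := h.2
        rwa [Set.preimage_image_eq _ (Option.some_injective _)] at this
  obtain ⟨b, hb, ho, hD⟩ := exists_gadget ht none _ hφ' hno
  choose D hD using hD
  obtain ⟨V₁, _, H₁, ι₁, R₁, hg₁, he₁, a₁, b₁, c₁⟩ :=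
    elim_all ht hb ho D hD H₀ hH₀ Set.univ Set.univ
  obtain ⟨V₂, _, H₂, ι₂, R₂, hg₂, he₂, a₂, b₂, c₂⟩ :=
    elim_all ht hb ho D hD H₁ hg₁ R₁ Set.univ
  let K : CH k (Fin N) :=
    { rel := fun e x => e.ncard = 3 ∧ φ e = x
      card3 := fun h => h.1
      func := fun h h' => h.2.symm.trans h'.2 }
  have hK : K.Good t := by
    intro S hS x
    obtain ⟨e, h1, h2, h3⟩ := hφ S hS x
    exact ⟨e, h1, h2, fun h => h3 ⟨trivial, h.2⟩⟩
  -- The copy of `K_N` is added for the injectivity of `f`.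
  let G := disj H₂ K (ι₂ (ι₁ (Classical.arbitrary V₀)))
  have hGj : ∀ i u, G.j i u = Sum.inr (i, u) := fun i u => G.j_notMem fun h => h
  refine ⟨_, inferInstance, G.out, Sum.inl ∘ ι₂ ∘ ι₁, Sum.inl '' R₂ ∪ Set.range Sum.inr,
    G.good ht hg₂ fun _ => hK, G.emb_inl.comp (he₂.comp he₁), ?_, ?_, ?_, ?_⟩
  · intro c hc hag e x he
    have h2 := hc.pullEmb G.emb_inl
    have h1 := h2.pullEmb he₂
    rw [Set.image_comp, Set.image_comp]
    refine a₁ _ h1 (a₂ _ h2 fun e x he heR => ?_) e x he (Set.subset_univ _)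
    exact hag _ _ ((G.emb_inl.rel _ _).2 he) ((Set.image_mono heR).trans Set.subset_union_left)
  · rintro v (⟨w, hw, h⟩ | ⟨w, h⟩)
    · obtain rfl := Sum.inl.inj h
      exact (b₂ _ hw).2 trivial
    · cases h
  · rintro _ x v w (⟨e, he, rfl⟩ | ⟨i, e, he, rfl⟩) hv hw hwe
    · obtain ⟨u, hu, huv⟩ := hv
      obtain rfl := Sum.inl.inj huv
      obtain ⟨e, rfl⟩ := c₂ e x _ he hu fun h => (b₁ _ h).2 trivial
      obtain ⟨_, ⟨u', -, rfl⟩, rfl⟩ := hwe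
      rcases hw with ⟨w, hw, h⟩ | ⟨w, h⟩
      · obtain rfl := Sum.inl.inj h
        exact (b₂ _ hw).2 trivial
      · cases h
    · obtain ⟨u, -, hu⟩ := hv
      rw [hGj] at hu; cases hu
  · intro c f hc hag
    by_contra hf
    rw [Finite.injective_iff_surjective] at hf
    simp only [Function.Surjective, not_forall, not_exists] at hf
    -- A colour `z` missed by `f` could be given to all triples through a new vertex.
    obtain ⟨z, hz⟩ := hf
    have hcK := hc.pullEmb (G.emb_j ())
    have hcf : ∀ e : Set (Fin N), e.ncard = 3 → c (G.j () '' e) = f (φ e) := by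
      intro e he
      refine hag _ _ (((G.emb_j ()).rel e _).2 ⟨he, rfl⟩) ?_
      rintro _ ⟨u, -, rfl⟩
      exact Or.inr ⟨_, (hGj _ _).symm⟩
    classical
    refine hno ⟨fun e => if none ∈ e then z else c (G.j () '' (some ⁻¹' e)), fun S hS x => ?_⟩
    by_contra! hcon
    by_cases hnS : none ∈ S
    · obtain ⟨e, h1, h2, h3, -⟩ := exists_triple (S := S) (by omega) hnS hnS
      have hzx : z = x := by have := (hcon e h1 h2).2; rwa [if_pos h3] at this
      obtain ⟨e, h1, h2⟩ := Set.exists_subset_card_eq (s := S \ {none}) (n := 3)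
        (by rw [Set.ncard_sdiff_singleton_of_mem hnS]; omega)
      have hne : none ∉ e := fun h => (h1 h).2 rfl
      have h := (hcon e (h1.trans Set.sdiff_subset) h2).2
      rw [if_neg hne, hcf] at h
      · exact hz _ (h.trans hzx.symm)
      · rw [← h2]
        refine Set.ncard_preimage_of_injective_subset_range (Option.some_injective _) ?_
        rintro (_ | u) hu
        · exact absurd hu hne
        · exact ⟨u, rfl⟩
    · have hr : S ⊆ Set.range some := by
        rintro (_ | u) hu
        · exact absurd hu hnS
        · exact ⟨u, rfl⟩
      obtain ⟨S, rfl⟩ := Set.subset_range_iff_exists_image_eq.1 hr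
      rw [Set.ncard_image_of_injective _ (Option.some_injective _)] at hS
      obtain ⟨e, h1, h2, h3⟩ := hcK S hS x
      refine h3 ⟨⟨_, h2, rfl⟩, ?_⟩
      have h := (hcon (some '' e) (Set.image_mono h1)
        (by rw [Set.ncard_image_of_injective _ (Option.some_injective _), h2])).2
      rwa [if_neg (by simp), Set.preimage_image_eq _ (Option.some_injective _)] at h

/-! ### The partite construction -/

/-- One step of the partite construction. For `P` with parts indexed by `Q` there is `P'` such that
every colouring of `P'` has a copy of `P`, respecting the parts, in which all the edges of reference
colour `y` over the three parts `T` get the same colour. The letters for the Hales–Jewett theorem are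
these edges. Each combinatorial line carries a copy of `P`, attached to the base on words along the
parts in `T`. -/
theorem partite_step {Q : Type} [Finite V] (ht : 4 ≤ t) (P : CH k V) (hP : P.Good t) (π : V → Q)
    (hπ : ∀ e x, P.rel e x → Set.InjOn π e) (T : Set Q) (y : Fin k) :
    ∃ (V' : Type) (_ : Finite V') (P' : CH k V') (π' : V' → Q), P'.Good t ∧
      (∀ e x, P'.rel e x → Set.InjOn π' e) ∧
      ∀ c : Set V' → Fin k, ∃ j : V → V', Emb P P' j ∧ (∀ v, π' (j v) = π v) ∧
        ∃ z, ∀ e, P.rel e y → π '' e = T → c (j '' e) = z := by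
  classical
  by_cases hB : ∃ e, P.rel e y ∧ π '' e = T
  swap
  · exact ⟨V, inferInstance, P, π, hP, hπ, fun c => ⟨id, Emb.id P, fun _ => rfl, c ∅,
      fun e h1 h2 => absurd ⟨e, h1, h2⟩ hB⟩⟩
  let B := {e : Set V // P.rel e y ∧ π '' e = T}
  have hBne : Nonempty B := ⟨⟨_, hB.choose_spec⟩⟩
  have hT : T.ncard = 3 := by
    obtain ⟨e, h1, rfl⟩ := hB
    rw [(hπ e y h1).ncard_image, P.card3 h1]
  have hTf : T.Finite := Set.finite_of_ncard_pos (by omega)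
  obtain ⟨ι, _, hHJ⟩ := Combinatorics.Line.exists_mono_in_high_dimension B (Fin k)
  have hι : Nonempty ι := by
    obtain ⟨l, -⟩ := hHJ fun _ => y
    exact ⟨l.proper.choose⟩
  let i₀ : ι := Classical.arbitrary ι
  have hLf : Finite (Combinatorics.Line B ι) :=
    Finite.of_injective (fun l => l.idxFun) fun l l' h => by cases l; cases l'; cases h; rfl
  -- `vtx b τ` is the vertex of the edge `b` in the part `τ`.
  have hvtx : ∀ (b : B) (τ : Q), ∃ v, τ ∈ T → v ∈ b.1 ∧ π v = τ := by
    intro b τ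
    by_cases h : τ ∈ T
    · obtain ⟨v, hv⟩ := b.2.2.symm ▸ h
      exact ⟨v, fun _ => hv⟩
    · obtain ⟨v, -⟩ := Set.nonempty_of_ncard_ne_zero (s := b.1) (by rw [P.card3 b.2.1]; omega)
      exact ⟨v, fun h' => absurd h' h⟩
  choose vtx hvtx using hvtx
  have hvπ : ∀ (b : B) v, v ∈ b.1 → vtx b (π v) = v := by
    intro b v hv
    have h := hvtx b (π v) (b.2.2 ▸ Set.mem_image_of_mem _ hv)
    exact hπ _ _ b.2.1 h.1 hv h.2
  have hvT : ∀ b : B, vtx b '' T = b.1 := by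
    intro b
    conv_lhs => rw [← b.2.2, Set.image_image]
    rw [Set.image_congr (hvπ b), Set.image_id']
  let relT : Set V → Fin k → Prop := fun e x => P.rel e x ∧ π '' e = T
  -- The base consists of the triples of words all of whose coordinate projections are edges over `T`,
  -- each of colour `x` or `y`, and at least one of colour `x`.
  let H₀ : CH k (ι → V) :=
    { rel := fun e x => e.ncard = 3 ∧
        (∀ i, relT ((· i) '' e) x ∨ relT ((· i) '' e) y) ∧ ∃ i, relT ((· i) '' e) x
      card3 := fun h => h.1
      func := by
        rintro e x x' ⟨-, h1, i, h2⟩ ⟨-, h1', i', h2'⟩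
        rcases h1 i' with h | h
        · exact P.func h.1 h2'.1
        · rcases h1' i with h' | h'
          · exact P.func h2.1 h'.1
          · exact (P.func h2.1 h'.1).trans (P.func h.1 h2'.1) }
  have hH₀T : ∀ e x, H₀.rel e x → (fun f : ι → V => π (f i₀)) '' e = T := by
    intro e x h
    rw [← Set.image_image π (fun f : ι → V => f i₀)]
    rcases h.2.1 i₀ with h | h <;> exact h.2
  have hH₀π : ∀ e x, H₀.rel e x → Set.InjOn (fun f : ι → V => π (f i₀)) e := by
    intro e x h
    refine Set.injOn_of_ncard_image_eq ?_ (Set.finite_of_ncard_pos (by rw [h.1]; omega))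
    rw [hH₀T e x h, hT, h.1]
  have hH₀ : H₀.Good t := by
    intro S hS x
    by_contra! hcon
    have hinj : Set.InjOn (fun f : ι → V => π (f i₀)) S := by
      intro u hu v hv huv
      obtain ⟨e, h1, h2, h3, h4⟩ := exists_triple (by omega) hu hv
      exact hH₀π e x (hcon e h1 h2) h3 h4 huv
    have hsub : (fun f : ι → V => π (f i₀)) '' S ⊆ T := by
      rintro _ ⟨u, hu, rfl⟩
      obtain ⟨e, h1, h2, h3, -⟩ := exists_triple (S := S) (by omega) hu hu
      rw [← hH₀T e x (hcon e h1 h2)]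
      exact Set.mem_image_of_mem _ h3
    have := Set.ncard_le_ncard hsub hTf
    rw [hinj.ncard_image] at this
    omega
  -- A vertex of the copy of `P` on the line `L` is kept on the active coordinates and replaced by the
  -- vertex of the prescribed letter in the same part on the others.
  let ρ : Combinatorics.Line B ι → V → ι → V := fun L u i =>
    (L.idxFun i).elim u fun b => vtx b (π u)
  have hρinj : ∀ L, Function.Injective (ρ L) := by
    intro L u v huv
    obtain ⟨i, hi⟩ := L.proper
    have := congrFun huv i
    simpa only [ρ, hi, Option.elim_none] using this
  have hρnone : ∀ (L : Combinatorics.Line B ι) i, L.idxFun i = none → ∀ e : Set V,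
      (· i) '' (ρ L '' e) = e := by
    intro L i hi e
    rw [Set.image_image]
    simp only [ρ, hi, Option.elim_none, Set.image_id']
  have hρsome : ∀ (L : Combinatorics.Line B ι) i b, L.idxFun i = some b → ∀ e : Set V,
      π '' e = T → (· i) '' (ρ L '' e) = b.1 := by
    intro L i b hi e he
    rw [Set.image_image]
    simp only [ρ, hi, Option.elim_some]
    rw [← hvT b, ← he, Set.image_image]
  let G : Glue k (ι → V) (Combinatorics.Line B ι) V :=
    { H₀ := H₀
      H := fun _ => P
      R := π ⁻¹' T
      ρ := ρ
      inj := fun L => (hρinj L).injOn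
      compat := by
        intro L e x he
        obtain ⟨i, hi⟩ := L.proper
        constructor
        · rintro ⟨-, h1, i', h2⟩
          have h1 := h1 i
          rw [hρnone L i hi] at h1
          rcases h1 with h1 | h1
          · exact h1.1
          · rcases hi' : L.idxFun i' with _ | b
            · rw [hρnone L i' hi'] at h2
              exact h2.1
            · rw [hρsome L i' b hi' e h1.2] at h2
              rw [P.func h2.1 b.2.1]
              exact h1.1
        · intro h
          have heT : π '' e = T := by
            refine Set.eq_of_subset_of_ncard_le (Set.image_subset_iff.2 he) ?_ hTf
            rw [(hπ e x h).ncard_image, P.card3 h, hT]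
          refine ⟨?_, fun i' => ?_, i, ?_⟩
          · rw [Set.ncard_image_of_injective _ (hρinj L), P.card3 h]
          · rcases hi' : L.idxFun i' with _ | b
            · rw [hρnone L i' hi']
              exact Or.inl ⟨h, heT⟩
            · rw [hρsome L i' b hi' e heT]
              exact Or.inr b.2
          · rw [hρnone L i hi]
            exact ⟨h, heT⟩ }
  let π' : (ι → V) ⊕ (Combinatorics.Line B ι × V) → Q :=
    Sum.elim (fun f => π (f i₀)) fun p => π p.2
  have hπj : ∀ L v, π' (G.j L v) = π v := by
    intro L v
    by_cases hv : v ∈ G.R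
    · rw [G.j_mem hv]
      change π (ρ L v i₀) = π v
      rcases hi : L.idxFun i₀ with _ | b
      · simp only [ρ, hi, Option.elim_none]
      · simp only [ρ, hi, Option.elim_some]
        exact (hvtx b _ hv).2
    · rw [G.j_notMem hv]; rfl
  refine ⟨_, inferInstance, G.out, π', G.good ht hH₀ fun _ => hP, ?_, ?_⟩
  · rintro _ x (⟨e, he, rfl⟩ | ⟨L, e, he, rfl⟩)
    · rintro _ ⟨u, hu, rfl⟩ _ ⟨v, hv, rfl⟩ huv
      exact congrArg _ (hH₀π e x he hu hv huv)
    · rintro _ ⟨u, hu, rfl⟩ _ ⟨v, hv, rfl⟩ huv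
      rw [hπj, hπj] at huv
      exact congrArg _ (hπ e x he hu hv huv)
  · intro c
    -- A word of letters is coloured by the colour of the triple it determines over `T`.
    obtain ⟨L, z, hz⟩ := hHJ fun w => c (Sum.inl '' ((fun τ i => vtx (w i) τ) '' T))
    refine ⟨G.j L, G.emb_j L, hπj L, z, fun e he heT => ?_⟩
    let b : B := ⟨e, he, heT⟩
    rw [← hz b, G.j_image (i := L) (e := e) (fun u hu => heT.subset (Set.mem_image_of_mem _ hu))]
    congr 2
    rw [← heT, Set.image_image]
    refine Set.image_congr fun u hu => ?_
    funext i
    rw [Combinatorics.Line.apply_def]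
    change (L.idxFun i).elim u (fun b => vtx b (π u)) = vtx ((L.idxFun i).getD b) (π u)
    rcases L.idxFun i with _ | b'
    · exact (hvπ b u hu).symm
    · rfl

/-- Every colouring `c` of a suitable good `X` has a copy of `C` on which `c` is a function of the
reference colour. -/
theorem exists_pattern [Finite U] [Nonempty U] (ht : 4 ≤ t) (C : CH k U) (hC : C.Good t) :
    ∃ (W : Type) (_ : Finite W) (X : CH k W), X.Good t ∧
      ∀ c : Set W → Fin k, ∃ h, Emb C X h ∧ ∃ f : Fin k → Fin k,
        ∀ e x, C.rel e x → c (h '' e) = f x := by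
  obtain ⟨p, hp⟩ := ramsey_set (Fin k → Fin k) 3 (Nat.card U)
  -- The pairs in `A` are treated one at a time: in every colouring of the system, some family of
  -- copies of `C`, one over each choice of parts, has the same colour on all edges of colour `a.2`
  -- over the parts `a.1`, for each `a ∈ A`.
  have key : ∀ A : Set (Set (Fin p) × Fin k),
      ∃ (V : Type) (_ : Finite V) (P : CH k V) (π : V → Fin p), P.Good t ∧
      (∀ e x, P.rel e x → Set.InjOn π e) ∧
      ∀ c : Set V → Fin k, ∃ h : (U ↪ Fin p) → U → V,
        (∀ g, Emb C P (h g) ∧ ∀ u, π (h g u) = g u) ∧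
        ∀ a ∈ A, ∃ z, ∀ (g : U ↪ Fin p) e, C.rel e a.2 → g '' e = a.1 → c (h g '' e) = z := by
    intro A
    induction A, A.toFinite using Set.Finite.induction_on with
    | empty =>
      have hp0 : Nonempty (Fin p) := by
        obtain ⟨S, hS, -⟩ := hp fun _ => id
        have : 0 < Nat.card U := Nat.card_pos
        obtain ⟨a, -⟩ := Set.nonempty_of_ncard_ne_zero (s := S) (by omega)
        exact ⟨a⟩
      let E₀ : CH k Unit := ⟨fun _ _ => False, fun h => h.elim, fun h => h.elim⟩
      let G : Glue k Unit (U ↪ Fin p) U :=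
        { H₀ := E₀
          H := fun _ => C
          R := ∅
          ρ := fun _ _ => ()
          inj := fun _ => Set.injOn_empty _
          compat := by
            intro _ e x he
            obtain rfl := Set.subset_empty_iff.1 he
            exact ⟨fun h => h.elim, fun h => by simpa using C.card3 h⟩ }
      have hE₀ : E₀.Good t := by
        intro S hS x
        obtain ⟨e, h1, h2⟩ := Set.exists_subset_card_eq (s := S) (n := 3) (by omega)
        exact ⟨e, h1, h2, fun h => h⟩
      let π : Unit ⊕ ((U ↪ Fin p) × U) → Fin p :=
        Sum.elim (fun _ => Classical.arbitrary _) fun q => q.1 q.2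
      have hπj : ∀ g u, π (G.j g u) = g u := by
        intro g u
        rw [G.j_notMem (fun h => h)]; rfl
      refine ⟨_, inferInstance, G.out, π, G.good ht hE₀ fun _ => hC, ?_, fun c =>
        ⟨G.j, fun g => ⟨G.emb_j g, hπj g⟩, fun _ h => h.elim⟩⟩
      rintro _ x (⟨e, he, rfl⟩ | ⟨g, e, he, rfl⟩)
      · exact he.elim
      · rintro _ ⟨u, hu, rfl⟩ _ ⟨v, hv, rfl⟩ huv
        rw [hπj, hπj] at huv
        rw [g.injective huv]
    | @insert a A _ _ ih =>
      obtain ⟨V, _, P, π, hP, hπ, hc⟩ := ih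
      obtain ⟨V', hV', P', π', hP', hπ', hc'⟩ := partite_step ht P hP π hπ a.1 a.2
      refine ⟨V', hV', P', π', hP', hπ', fun c => ?_⟩
      obtain ⟨j, hj, hjπ, z, hz⟩ := hc' c
      obtain ⟨h, hh, hA⟩ := hc fun e => c (j '' e)
      refine ⟨fun g => j ∘ h g, fun g => ⟨hj.comp (hh g).1, fun u => ?_⟩, ?_⟩
      · exact (hjπ _).trans ((hh g).2 u)
      · rintro b (rfl | hb)
        · refine ⟨z, fun g e he hg => ?_⟩
          rw [Set.image_comp]
          refine hz _ (((hh g).1.rel _ _).2 he) ?_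
          rw [Set.image_image, ← hg]
          exact Set.image_congr fun u _ => (hh g).2 u
        · obtain ⟨z, hz⟩ := hA b hb
          refine ⟨z, fun g e he hg => ?_⟩
          rw [Set.image_comp]
          exact hz g e he hg
  obtain ⟨W, hW, X, π, hX, -, hc⟩ := key Set.univ
  refine ⟨W, hW, X, hX, fun c => ?_⟩
  obtain ⟨h, hh, hA⟩ := hc c
  choose Z hZ using fun a => hA a trivial
  obtain ⟨S, hS, f, hf⟩ := hp fun T y => Z (T, y)
  obtain ⟨q⟩ : Nonempty (U ≃ S) := Finite.card_eq.1 hS.symm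
  let g : U ↪ Fin p := q.toEmbedding.trans (Function.Embedding.subtype _)
  refine ⟨h g, (hh g).1, f, fun e x he => ?_⟩
  rw [hZ (g '' e, x) g e he rfl, ← hf (g '' e)]
  · rintro _ ⟨u, -, rfl⟩
    exact (q u).2
  · rw [Set.ncard_image_of_injective _ g.injective, C.card3 he]

/-! ### Positive senders -/

/-- The two disjoint triples of `Bool × Fin 3`. -/
def blk (i : Bool) : Set (Bool × Fin 3) := {q | q.1 = i}

theorem blk_ncard (i : Bool) : (blk i).ncard = 3 := by
  have : blk i = (fun a => (i, a)) '' Set.univ := by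
    ext ⟨a, b⟩
    constructor
    · rintro rfl; exact ⟨b, trivial, rfl⟩
    · rintro ⟨b, -, h⟩; cases h; rfl
  rw [this, Set.ncard_image_of_injective _ (Prod.mk_right_injective i), Set.ncard_univ,
    Nat.card_fin]

/-- Two disjoint edges of the same reference colour `x₀`. -/
def twoEdges (x₀ : Fin k) : CH k (Bool × Fin 3) where
  rel e x := (∃ i, e = blk i) ∧ x = x₀
  card3 := by rintro _ x ⟨⟨i, rfl⟩, -⟩; exact blk_ncard i
  func h h' := h.2.trans h'.2.symm

theorem twoEdges_good (ht : 4 ≤ t) (x₀ : Fin k) : (twoEdges x₀).Good t := by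
  intro S hS x
  by_contra! hcon
  obtain ⟨a, ha⟩ := Set.nonempty_of_ncard_ne_zero (s := S) (by omega)
  have hsub : S ⊆ blk a.1 := by
    intro v hv
    obtain ⟨e, h1, h2, h3, h4⟩ := exists_triple (by omega) ha hv
    obtain ⟨⟨i, rfl⟩, -⟩ := hcon e h1 h2
    exact Eq.trans h4 (Eq.symm h3)
  have := Set.ncard_le_ncard hsub
  rw [blk_ncard] at this
  omega

/-- A positive sender whose two linked edges are disjoint and have reference colour `x₀`. -/
theorem exists_sender (hk : 0 < k) (ht : 4 ≤ t) (x₀ : Fin k) :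
    ∃ (W : Type) (_ : Finite W) (X : CH k W) (β : Bool × Fin 3 → W), X.Good t ∧
      Function.Injective β ∧ (∀ i, X.rel (β '' blk i) x₀) ∧
      ∀ c, X.GoodCol t c → c (β '' blk true) = c (β '' blk false) := by
  classical
  obtain ⟨V, _, H, ι, R, hH, hι, hdet, hιR, hsep, hf⟩ :=
    exists_det hk ht (twoEdges x₀) (twoEdges_good ht x₀)
  let C : CH k V :=
    { rel := fun e x => H.rel e x ∧ e ⊆ R
      card3 := fun h => H.card3 h.1
      func := fun h h' => H.func h.1 h'.1 }
  have hC : C.Good t := by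
    intro S hS x
    obtain ⟨e, h1, h2, h3⟩ := hH S hS x
    exact ⟨e, h1, h2, fun h => h3 h.1⟩
  have : Nonempty V := ⟨ι (true, 0)⟩
  obtain ⟨W, _, X, hX, hpat⟩ := exists_pattern ht C hC
  let G₀ := disj (twoEdges x₀) X (true, 0)
  have hG₀j : ∀ i u, G₀.j i u = Sum.inr (i, u) := fun i u => G₀.j_notMem fun h => h
  -- The vertices `ι v` of the two edges are common to all copies of `H`; the other roots follow `h`.
  let I := {h : V → W // Emb C X h}
  let ρ : I → V → (Bool × Fin 3) ⊕ (Unit × W) := fun h u =>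
    if hu : ∃ v, ι v = u then Sum.inl hu.choose else Sum.inr ((), h.1 u)
  have hρι : ∀ h v, ρ h (ι v) = Sum.inl v := by
    intro h v
    have hu : ∃ v', ι v' = ι v := ⟨v, rfl⟩
    exact (dif_pos hu).trans (congrArg _ (hι.inj hu.choose_spec))
  have hρn : ∀ (h : I) u, (¬ ∃ v, ι v = u) → ρ h u = Sum.inr ((), h.1 u) :=
    fun h u hu => dif_neg hu
  have hρinj : ∀ h, Function.Injective (ρ h) := by
    intro h u w huw
    by_cases hu : ∃ v, ι v = u <;> by_cases hw : ∃ v, ι v = w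
    · obtain ⟨v, rfl⟩ := hu
      obtain ⟨v', rfl⟩ := hw
      rw [hρι, hρι] at huw
      rw [Sum.inl.inj huw]
    · obtain ⟨v, rfl⟩ := hu
      rw [hρι, hρn h w hw] at huw
      cases huw
    · obtain ⟨v, rfl⟩ := hw
      rw [hρι, hρn h u hu] at huw
      cases huw
    · rw [hρn h u hu, hρn h w hw] at huw
      exact h.2.inj (Prod.mk.inj (Sum.inr.inj huw)).2
  have hριi : ∀ h (e : Set (Bool × Fin 3)), ρ h '' (ι '' e) = Sum.inl '' e := by
    intro h e
    rw [Set.image_image]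
    exact Set.image_congr fun u _ => hρι h u
  have hρR : ∀ (h : I) (e : Set V), (∀ v, ι v ∉ e) → ρ h '' e = G₀.j () '' (h.1 '' e) := by
    intro h e he
    rw [Set.image_image]
    refine Set.image_congr fun u hu => ?_
    rw [hG₀j, hρn h u]
    rintro ⟨v, rfl⟩
    exact he v hu
  let G : Glue k _ I V :=
    { H₀ := G₀.out
      H := fun _ => H
      R := R ∪ Set.range ι
      ρ := ρ
      inj := fun h => (hρinj h).injOn
      compat := by
        intro h e x he
        by_cases h1 : e ⊆ Set.range ι
        · obtain ⟨e, rfl⟩ := Set.subset_range_iff_exists_image_eq.1 h1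
          rw [hριi, G₀.emb_inl.rel, hι.rel]; rfl
        · obtain ⟨w, hw, hwι⟩ := Set.not_subset.1 h1
          have hwR : w ∈ R := (he hw).resolve_right hwι
          by_cases h2 : ∃ v, ι v ∈ e
          -- A set meeting both `range ι` and `R` is an edge on neither side.
          · obtain ⟨v, hv⟩ := h2
            constructor
            · intro hr
              have hm1 : Sum.inl v ∈ ρ h '' e := ⟨_, hv, hρι h v⟩
              have hm2 : Sum.inr ((), h.1 w) ∈ ρ h '' e := ⟨_, hw, hρn h w hwι⟩
              rcases hr with ⟨a, -, ha⟩ | ⟨i, a, -, ha⟩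
              · rw [ha] at hm2; obtain ⟨_, _, h⟩ := hm2; cases h
              · rw [ha] at hm1; obtain ⟨_, _, h⟩ := hm1; rw [hG₀j] at h; cases h
            · intro hr
              exact absurd hw (hsep e x v w hr hv hwR)
          · have h2 : ∀ v, ι v ∉ e := fun v hv => h2 ⟨v, hv⟩
            have heR : e ⊆ R := by
              intro u hu
              rcases he hu with h | ⟨v, rfl⟩
              · exact h
              · exact absurd hu (h2 v)
            rw [hρR h e h2, (G₀.emb_j ()).rel]
            refine (h.2.rel e x).trans ?_
            exact ⟨fun h => h.1, fun h => ⟨h, heR⟩⟩ }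
  refine ⟨_, inferInstance, G.out, Sum.inl ∘ Sum.inl,
    G.good ht (G₀.good ht (twoEdges_good ht x₀) fun _ => hX) fun _ => hH,
    Sum.inl_injective.comp Sum.inl_injective, fun i => ?_, fun c hc => ?_⟩
  · rw [(G.emb_inl.comp G₀.emb_inl).rel]
    exact ⟨⟨i, rfl⟩, rfl⟩
  · obtain ⟨h, hh, f, hcf⟩ := hpat fun e => c (Sum.inl '' (G₀.j () '' e))
    let i : I := ⟨h, hh⟩
    have hci := hc.pullEmb (G.emb_j i)
    have hcf' : ∀ e x, H.rel e x → e ⊆ R → c (G.j i '' e) = f x := by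
      intro e x he heR
      rw [← hcf e x ⟨he, heR⟩, G.j_image (i := i) (heR.trans Set.subset_union_left)]
      rw [← hρR i e fun v hv => hιR v (heR hv)]
    have hfi := hf _ f hci hcf'
    -- After composition with the inverse of `f`, the colouring agrees with the reference colouring
    -- inside `R`.
    let σ := Equiv.ofBijective f (Finite.injective_iff_bijective.1 hfi)
    have hgood : H.GoodCol t fun e => σ.symm (c (G.j i '' e)) := by
      intro S hS x
      obtain ⟨e, h1, h2, h3⟩ := hci S hS (σ x)
      exact ⟨e, h1, h2, fun h => h3 ⟨h.1, by rw [← h.2, σ.apply_symm_apply]⟩⟩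
    have hfin : ∀ q, c ((Sum.inl ∘ Sum.inl) '' blk q) = σ x₀ := by
      intro q
      have h1 := hdet _ hgood (fun e x he heR => by
        rw [hcf' e x he heR]; exact σ.symm_apply_apply x) (blk q) x₀ ⟨⟨q, rfl⟩, rfl⟩
      rw [Equiv.symm_apply_eq,
        G.j_image (i := i) ((Set.image_subset_range _ _).trans Set.subset_union_right)] at h1
      rw [Set.image_comp, ← hριi i]
      exact h1
    rw [hfin, hfin]

/-- Concatenation of senders, with a level function `ℓ` that bounds the distance from below. -/
theorem exists_far_sender (hk : 0 < k) (ht : 4 ≤ t) (x₀ : Fin k) (n : ℕ) :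
    ∃ (V : Type) (_ : Finite V) (H : CH k V) (e f : Set V) (ℓ : V → ℕ), H.Good t ∧
      H.rel e x₀ ∧ H.rel f x₀ ∧ (∀ a x, H.rel a x → ∀ u ∈ a, ∀ v ∈ a, ℓ u ≤ ℓ v + 1) ∧
      (∃ u ∈ e, ℓ u = 0) ∧ (∀ u ∈ f, ℓ u = n) ∧ ∀ c, H.GoodCol t c → c e = c f := by
  classical
  obtain ⟨W, _, X, β, hX, hβ, hβx, hXc⟩ := exists_sender hk ht x₀
  induction n with
  | zero =>
    exact ⟨W, inferInstance, X, β '' blk true, β '' blk false, fun _ => 0, hX, hβx _, hβx _,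
      fun _ _ _ _ _ _ _ => Nat.zero_le _, ⟨β (true, 0), ⟨_, rfl, rfl⟩, rfl⟩, fun _ _ => rfl, hXc⟩
  | succ n ih =>
    obtain ⟨V, _, H, e, f, ℓ, hH, he, hf, hℓ, h0, hn, hc⟩ := ih
    have hb1 : (β '' blk true).ncard = 3 := X.card3 (hβx true)
    obtain ⟨q, hq⟩ := Set.nonempty_of_ncard_ne_zero (s := f) (by rw [H.card3 hf]; omega)
    obtain ⟨ρ, hρ, hρf, -⟩ := exists_root_map hb1 (H.card3 hf)
      (o := β (true, 0)) ⟨_, rfl, rfl⟩ hq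
    let G : Glue k V Unit W :=
      { H₀ := H
        H := fun _ => X
        R := β '' blk true
        ρ := fun _ => ρ
        inj := fun _ => hρ
        compat := fun _ => compat_edge hb1 hρ (hβx true) (hρf ▸ hf) }
    -- The last edge of the new sender is on level `n + 1`, its other private vertices on level `n`.
    let ℓ' : V ⊕ (Unit × W) → ℕ :=
      Sum.elim ℓ fun p => if p.2 ∈ β '' blk false then n + 1 else n
    have hdis : ∀ w ∈ β '' blk false, w ∉ β '' blk true := by
      rintro _ ⟨u, hu, rfl⟩ ⟨v, hv, h⟩
      obtain rfl := hβ h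
      exact Bool.noConfusion (Eq.trans (Eq.symm hv) hu)
    have hℓj : ∀ w, n ≤ ℓ' (G.j () w) ∧ ℓ' (G.j () w) ≤ n + 1 := by
      intro w
      by_cases hw : w ∈ G.R
      · rw [G.j_mem hw]
        have : ℓ (ρ w) = n := hn _ (hρf ▸ Set.mem_image_of_mem _ hw)
        change n ≤ ℓ (ρ w) ∧ ℓ (ρ w) ≤ n + 1
        omega
      · rw [G.j_notMem hw]
        change n ≤ (if w ∈ β '' blk false then n + 1 else n) ∧
          (if w ∈ β '' blk false then n + 1 else n) ≤ n + 1
        split_ifs <;> omega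
    refine ⟨_, inferInstance, G.out, Sum.inl '' e, G.j () '' (β '' blk false), ℓ',
      G.good ht hH fun _ => hX, (G.emb_inl.rel _ _).2 he, ((G.emb_j ()).rel _ _).2 (hβx _),
      ?_, ?_, ?_, ?_⟩
    · rintro _ x (⟨a, ha, rfl⟩ | ⟨_, a, ha, rfl⟩)
      · rintro _ ⟨u, hu, rfl⟩ _ ⟨v, hv, rfl⟩
        exact hℓ a x ha u hu v hv
      · rintro _ ⟨u, -, rfl⟩ _ ⟨v, -, rfl⟩
        have h1 := hℓj u
        have h2 := hℓj v
        exact h1.2.trans (Nat.add_le_add_right h2.1 1)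
    · obtain ⟨u, hu, h⟩ := h0
      exact ⟨_, ⟨u, hu, rfl⟩, h⟩
    · rintro _ ⟨w, hw, rfl⟩
      rw [G.j_notMem (hdis w hw)]
      exact if_pos hw
    · intro c hcG
      rw [hc _ (hcG.pullEmb G.emb_inl), ← hXc _ (hcG.pullEmb (G.emb_j ()))]
      rw [G.j_image (i := ()) (le_refl (β '' blk true))]
      change c _ = c (Sum.inl '' (ρ '' _))
      rw [hρf]

/-- Discrete intermediate value property of a level function along a path. -/
theorem exists_level (L : ℕ → ℕ) (f : Finset ℕ) (n : ℕ) (hf : ∀ u ∈ f, L u = n)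
    (es : List (Finset ℕ)) (hes : ∀ g ∈ es, ∀ u ∈ g, ∀ v ∈ g, L u ≤ L v + 1)
    (hch : es.IsChain fun g h => (g ∩ h).Nonempty) (hlast : es.getLast? = some f)
    (g : Finset ℕ) (hg : es.head? = some g) (u : ℕ) (hu : u ∈ g) (m : ℕ) (h1 : L u ≤ m)
    (h2 : m ≤ n) : ∃ w ∈ es.foldr (· ∪ ·) ∅, L w = m := by
  induction es generalizing g u with
  | nil => cases hg
  | cons a es ih =>
    obtain rfl : a = g := Option.some.inj hg
    cases es with
    | nil =>
      obtain rfl : a = f := Option.some.inj hlast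
      refine ⟨u, by simpa using hu, ?_⟩
      have := hf u hu
      omega
    | cons h es =>
      obtain ⟨v, hv⟩ := (List.isChain_cons_cons.1 hch).1
      obtain ⟨hva, hvh⟩ := Finset.mem_inter.1 hv
      by_cases hvm : L v ≤ m
      · obtain ⟨w, hw, hwm⟩ := ih (fun g hg => hes g (List.mem_cons_of_mem _ hg))
          (List.isChain_cons_cons.1 hch).2 (by simpa using hlast) h rfl v hvh hvm
        exact ⟨w, Finset.mem_union_right _ hw, hwm⟩
      · have := hes a List.mem_cons_self v hva u hu
        exact ⟨u, Finset.mem_union_left _ hu, by omega⟩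

end Sender

/-- Positive signal senders at arbitrary distance: for all `s ≥ 1`, `t ≥ 4`, `k ≥ 2`
there is a 3-uniform hypergraph `H` with edges `e, f` such that `H` admits a
`K_t^{(3)}`-free `k`-coloring, every connecting path between `e` and `f` has at least `s`
vertices, and every `K_t^{(3)}`-free `k`-coloring gives `e` and `f` the same color. -/
theorem stmt_18 (s t k : ℕ) (hs : 1 ≤ s) (ht : 4 ≤ t) (hk : 2 ≤ k) :
    ∃ (E : Finset (Finset ℕ)) (e f : Finset ℕ),
      (∀ g ∈ E, g.card = 3) ∧ e ∈ E ∧ f ∈ E ∧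
      (∃ c : Finset ℕ → Fin k, NoMonoK3 k t E c) ∧
      (∀ S, IsConnPath E e f S → s ≤ S.card) ∧
      (∀ c : Finset ℕ → Fin k, NoMonoK3 k t E c → c e = c f) := by
  classical
  let x₀ : Fin k := ⟨0, by omega⟩
  obtain ⟨V, _, H, e, f, ℓ, hH, he, hf, hℓ, ⟨u₀, hu₀, h0⟩, hn, hc⟩ :=
    Sender.exists_far_sender (k := k) (by omega) ht x₀ s
  obtain ⟨j, hj⟩ := exists_injective_nat V
  -- The vertices are renamed by natural numbers; `F` is the corresponding map on vertex sets.
  let F : Set V → Finset ℕ := fun a => (j '' a).toFinite.toFinset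
  have hFc : ∀ a, (F a : Set ℕ) = j '' a := fun a => Set.Finite.coe_toFinset _
  have hFm : ∀ a m, m ∈ F a ↔ ∃ v ∈ a, j v = m := fun a m => Set.Finite.mem_toFinset _
  have hFinj : Function.Injective F := by
    intro a b hab
    apply hj.image_injective
    rw [← hFc, ← hFc, hab]
  have hFcard : ∀ a, (F a).card = a.ncard := by
    intro a
    rw [← Set.ncard_coe_finset, hFc, Set.ncard_image_of_injective _ hj]
  have hFsub : ∀ a (S : Finset ℕ), S ⊆ F a → ∃ b ⊆ a, S = F b := by
    intro a S hS
    have h : (S : Set ℕ) ⊆ j '' a := hFc a ▸ Finset.coe_subset.2 hS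
    obtain ⟨b, hb, hbS⟩ := Set.subset_image_iff.1 h
    exact ⟨b, hb, Finset.coe_injective (by rw [hFc, hbS])⟩
  have hFmono : ∀ a b, a ⊆ b → F a ⊆ F b := by
    intro a b hab m hm
    obtain ⟨v, hv, rfl⟩ := (hFm _ _).1 hm
    exact (hFm _ _).2 ⟨v, hab hv, rfl⟩
  let E : Finset (Finset ℕ) := {a : Set V | ∃ x, H.rel a x}.toFinite.toFinset.image F
  have hE : ∀ g, g ∈ E ↔ ∃ a, (∃ x, H.rel a x) ∧ F a = g := by
    intro g
    simp only [E, Finset.mem_image, Set.Finite.mem_toFinset, Set.mem_ofPred_eq]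
  refine ⟨E, F e, F f, ?_, (hE _).2 ⟨e, ⟨_, he⟩, rfl⟩, (hE _).2 ⟨f, ⟨_, hf⟩, rfl⟩, ?_, ?_, ?_⟩
  · intro g hg
    obtain ⟨a, ⟨x, ha⟩, rfl⟩ := (hE g).1 hg
    rw [hFcard, H.card3 ha]
  · have hcol : ∀ g, ∃ x, ∀ a y, F a = g → H.rel a y → y = x := by
      intro g
      by_cases h : ∃ a x, F a = g ∧ H.rel a x
      · obtain ⟨a, x, rfl, hx⟩ := h
        refine ⟨x, fun b y hb hy => ?_⟩
        obtain rfl := hFinj hb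
        exact H.func hy hx
      · exact ⟨x₀, fun a y h1 h2 => absurd ⟨a, y, h1, h2⟩ h⟩
    choose col hcol using hcol
    refine ⟨col, ?_⟩
    rintro ⟨S, hS, x, hx⟩
    have hSsub : S ⊆ F Set.univ := by
      intro m hm
      have hSc : (S : Set ℕ).ncard = t := by rw [Set.ncard_coe_finset, hS]
      obtain ⟨e, h1, h2, h3, -⟩ := Sender.exists_triple (S := (S : Set ℕ)) (by omega) hm hm
      have hef : e.Finite := S.finite_toSet.subset h1
      have h := (hx hef.toFinset (by rwa [← Finset.coe_subset, hef.coe_toFinset])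
        (by rw [← Set.ncard_eq_toFinset_card e hef, h2])).1
      obtain ⟨a, -, ha⟩ := (hE _).1 h
      have hma : m ∈ F a := ha ▸ hef.mem_toFinset.2 h3
      exact hFmono _ _ (Set.subset_univ a) hma
    obtain ⟨S, -, rfl⟩ := hFsub _ _ hSsub
    rw [hFcard] at hS
    obtain ⟨a, h1, h2, h3⟩ := hH S hS x
    obtain ⟨h4, h5⟩ := hx (F a) (hFmono _ _ h1) (by rw [hFcard, h2])
    obtain ⟨b, ⟨y, hy⟩, hb⟩ := (hE _).1 h4
    obtain rfl := hFinj hb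
    have := hcol (F b) b y rfl hy
    exact h3 (h5 ▸ this ▸ hy)
  · rintro S ⟨es, -, hhead, hlast, hes, hch, hS, -⟩
    let L : ℕ → ℕ := Function.extend j ℓ 0
    have hL : ∀ v, L (j v) = ℓ v := fun v => hj.extend_apply _ _ _
    have hlev : ∀ m ≤ s, ∃ w ∈ S, L w = m := by
      intro m hm
      rw [hS]
      refine Sender.exists_level L (F f) s ?_ es ?_ hch hlast (F e) hhead (j u₀)
        ((hFm _ _).2 ⟨u₀, hu₀, rfl⟩) m (by rw [hL, h0]; exact Nat.zero_le _) hm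
      · intro u hu
        obtain ⟨v, hv, rfl⟩ := (hFm _ _).1 hu
        rw [hL, hn v hv]
      · intro g hg u hu v hv
        obtain ⟨a, ⟨x, ha⟩, rfl⟩ := (hE g).1 (hes g hg)
        obtain ⟨u', hu', rfl⟩ := (hFm _ _).1 hu
        obtain ⟨v', hv', rfl⟩ := (hFm _ _).1 hv
        rw [hL, hL]
        exact hℓ a x ha u' hu' v' hv'
    have hsub : Finset.range s ⊆ S.image L := by
      intro m hm
      exact Finset.mem_image.2 (hlev m (Finset.mem_range.1 hm).le)
    calc s = (Finset.range s).card := (Finset.card_range s).symm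
      _ ≤ (S.image L).card := Finset.card_le_card hsub
      _ ≤ S.card := Finset.card_image_le
  · intro c hcE
    refine hc (fun a => c (F a)) fun S hS x => ?_
    by_contra! hcon
    refine hcE ⟨F S, by rw [hFcard, hS], x, fun g hg hg3 => ?_⟩
    obtain ⟨a, ha, rfl⟩ := hFsub _ _ hg
    rw [hFcard] at hg3
    obtain ⟨h1, h2⟩ := hcon a ha hg3
    exact ⟨(hE _).2 ⟨a, h1, rfl⟩, h2⟩
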